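/- Let V be a C⁵ perturbed quartic potential with ℓ ∈ {−1,1} equal to the sign of V⁽⁴⁾(0), and let x_n(v;t) = (−1)ⁿ Γ_{n,t}⁻¹ x(Γ_{n,t}v; nπ − ℓt), where Γ_{n,t} = (8t/(3πn))^{1/2}. Then there exists K > 0 such that for every 0 < ε < 1/3 there exist C > 0 and N ≥ 1 with: for all n ≥ N, the supremum over v ∈ [−1,1] and t ∈ (0, K n^{1/3−ε}] of |x_n(v;t) − v sin(ℓt(v² − 1))| is at most C n^{−3ε/2}. -/

import Mathlib

open Real Filter Asymptotics Topology

/-- `V` is a C⁵ perturbed quartic potential `V(x) = x²/2 + ℓx⁴/4 + f(x)` with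
`ℓ ∈ {-1,1}` (equal to the sign of `V⁽⁴⁾(0)`) and `|f⁽ⁱ⁾(x)| = O(|x|^{5-i})` as `x → 0`. -/
def PerturbedQuartic (V f : ℝ → ℝ) (l : ℝ) : Prop :=
  (l = 1 ∨ l = -1) ∧ ContDiff ℝ 5 f ∧
  (∀ x : ℝ, V x = x ^ 2 / 2 + l * x ^ 4 / 4 + f x) ∧
  (∀ i : ℕ, i ≤ 5 → (iteratedDeriv i f) =O[𝓝 0] fun x : ℝ => |x| ^ (5 - i))

/-- `x v` is the solution of the Euler--Lagrange equation `ẍ = -V'(x)` with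
initial conditions `x(v;0) = 0`, `ẋ(v;0) = v`, for every `|v| ≤ v₀`. -/
def SolutionFamily (V : ℝ → ℝ) (x : ℝ → ℝ → ℝ) (v₀ : ℝ) : Prop :=
  ∀ v : ℝ, |v| ≤ v₀ → ContDiff ℝ 2 (x v) ∧ x v 0 = 0 ∧ deriv (x v) 0 = v ∧
    ∀ t : ℝ, deriv (deriv (x v)) t = -(deriv V (x v t))

/-!
In the complex variable `z = ẋ + i x` the equation of motion is a rotation perturbed by the cubic
force `-l x³` and by terms of order four. A near-identity cubic change of variable removes every
cubic monomial except the resonant `|z|² z`, whose coefficient only changes the angular velocity.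
Conservation of energy keeps `|z|²` within `O(A⁴)` of its initial value `A²`, so the angular
velocity is `1 + 3 l A² / 8`, and the new variable stays within `O(A⁴ |T|)` of this uniform
rotation up to time `T`. For `A = Γ v` and `T = n π - l t` the accumulated phase is
`n π + l t (v² - 1) + O(Γ² t)`, and dividing by `Γ` leaves an error `O(Γ² + Γ³ n + Γ² t)`, which
`Γ² ≲ n ^ (-2/3 - ε)` makes `O(n ^ (-3ε/2))`.
-/

section Growth

lemma eventually_forall_abs_le_mul_abs {p : ℝ → Prop} (hp : ∀ᶠ u in 𝓝 0, p u) (c : ℝ) :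
    ∀ᶠ A in 𝓝 (0 : ℝ), ∀ u, |u| ≤ c * |A| → p u := by
  obtain ⟨r, hr, hball⟩ := Metric.eventually_nhds_iff.1 hp
  have hlim : Tendsto (fun A : ℝ => c * |A|) (𝓝 0) (𝓝 0) :=
    Continuous.tendsto' (by fun_prop) _ _ (by simp)
  filter_upwards [hlim.eventually_lt_const hr] with A hA u hu
  exact hball (by simpa using hu.trans_lt hA)

lemma isBigO_sub_pow_succ_of_deriv_isBigO {E : Type*} [NormedAddCommGroup E] [NormedSpace ℝ E]
    {f : ℝ → E} {n : ℕ} (hf : ∀ᶠ u in 𝓝 0, DifferentiableAt ℝ f u)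
    (hf' : deriv f =O[𝓝 0] fun u => u ^ n) :
    (fun u => f u - f 0) =O[𝓝 0] fun u => u ^ (n + 1) := by
  obtain ⟨C, hC, hbound⟩ := hf'.exists_pos
  refine IsBigO.of_bound C ?_
  filter_upwards [eventually_forall_abs_le_mul_abs (hf.and hbound.bound) 1] with u hu
  have hderiv : ∀ s ∈ Set.uIcc 0 u, ‖deriv f s‖ ≤ C * |u| ^ n := fun s hs => by
    have hsu : |s| ≤ |u| := by simpa using Set.abs_sub_left_of_mem_uIcc hs
    calc ‖deriv f s‖ ≤ C * ‖s ^ n‖ := (hu s (by simpa using hsu)).2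
      _ = C * |s| ^ n := by rw [norm_pow, norm_eq_abs]
      _ ≤ C * |u| ^ n := by gcongr
  have hmvt := (convex_uIcc 0 u).norm_image_sub_le_of_norm_deriv_le
    (fun s hs => (hu s (by simpa using Set.abs_sub_left_of_mem_uIcc hs)).1) hderiv
    Set.left_mem_uIcc Set.right_mem_uIcc
  calc ‖f u - f 0‖ ≤ C * |u| ^ n * ‖u - 0‖ := hmvt
    _ = C * ‖u ^ (n + 1)‖ := by rw [sub_zero, norm_pow, norm_eq_abs]; ring

end Growth

section Rotation

open Complex (I)

lemma norm_sub_exp_mul_le_of_hasDerivAt {w E : ℝ → ℂ} {ω B : ℝ}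
    (hw : ∀ t, HasDerivAt w (ω * I * w t + E t) t) (hE : ∀ t, ‖E t‖ ≤ B) (T : ℝ) :
    ‖w T - Complex.exp ((ω * T : ℝ) * I) * w 0‖ ≤ B * |T| := by
  have hrot (t : ℝ) : HasDerivAt (fun s : ℝ => Complex.exp ((-(ω * s) : ℝ) * I))
      (Complex.exp ((-(ω * t) : ℝ) * I) * (-ω * I)) t := by
    have hlin := ((hasDerivAt_id t).const_mul ω).neg.ofReal_comp.mul_const I
    simpa using hlin.cexp
  have hderiv (t : ℝ) : HasDerivAt (fun s : ℝ => Complex.exp ((-(ω * s) : ℝ) * I) * w s)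
      (Complex.exp ((-(ω * t) : ℝ) * I) * E t) t :=
    ((hrot t).mul (hw t)).congr_deriv (by ring)
  have hmvt := convex_univ.norm_image_sub_le_of_norm_hasDerivWithin_le
    (fun t _ => (hderiv t).hasDerivWithinAt)
    (fun t _ => by rw [norm_mul, Complex.norm_exp_ofReal_mul_I, one_mul]; exact hE t)
    (Set.mem_univ 0) (Set.mem_univ T)
  have hcancel :
      Complex.exp ((ω * T : ℝ) * I) * Complex.exp ((-(ω * T) : ℝ) * I) = 1 := by
    rw [← Complex.exp_add]; simp
  calc ‖w T - Complex.exp ((ω * T : ℝ) * I) * w 0‖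
      = ‖Complex.exp ((ω * T : ℝ) * I) *
          (Complex.exp ((-(ω * T) : ℝ) * I) * w T - w 0)‖ := by
        rw [mul_sub, ← mul_assoc, hcancel, one_mul]
    _ = ‖Complex.exp ((-(ω * T) : ℝ) * I) * w T - w 0‖ := by
        rw [norm_mul, Complex.norm_exp_ofReal_mul_I, one_mul]
    _ ≤ B * |T| := by simpa using hmvt

end Rotation

/-- A phase curve of `ẍ = -V'(x)` with `x(0) = 0` and `ẋ(0) = A`, written as the complex curve
`z = ẋ + i x`, so that the harmonic oscillator `V(x) = x²/2` becomes `ż = i z`. -/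
structure IsPhaseCurve (V : ℝ → ℝ) (A : ℝ) (z : ℝ → ℂ) : Prop where
  hasDerivAt : ∀ t, HasDerivAt z (-(deriv V (z t).im : ℝ) + (z t).re * Complex.I) t
  map_zero : z 0 = A

namespace IsPhaseCurve

variable {V : ℝ → ℝ} {A : ℝ} {z : ℝ → ℂ}

lemma hasDerivAt_re (hz : IsPhaseCurve V A z) (t : ℝ) :
    HasDerivAt (fun s => (z s).re) (-deriv V (z t).im) t :=
  (Complex.reCLM.hasFDerivAt.comp_hasDerivAt t (hz.hasDerivAt t)).congr_deriv (by simp)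

lemma hasDerivAt_im (hz : IsPhaseCurve V A z) (t : ℝ) :
    HasDerivAt (fun s => (z s).im) (z t).re t :=
  (Complex.imCLM.hasFDerivAt.comp_hasDerivAt t (hz.hasDerivAt t)).congr_deriv (by simp)

lemma continuous (hz : IsPhaseCurve V A z) : Continuous z :=
  continuous_iff_continuousAt.2 fun t => (hz.hasDerivAt t).continuousAt

lemma energy_eq (hz : IsPhaseCurve V A z) (hV : Differentiable ℝ V) (t : ℝ) :
    (z t).re ^ 2 / 2 + V (z t).im = A ^ 2 / 2 + V 0 := by
  have hderiv (t : ℝ) : HasDerivAt (fun s => (z s).re ^ 2 / 2 + V (z s).im) 0 t :=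
    ((((hz.hasDerivAt_re t).fun_pow 2).div_const 2).add
      ((hV _).hasDerivAt.comp t (hz.hasDerivAt_im t))).congr_deriv (by norm_num; ring)
  have hconst := is_const_of_deriv_eq_zero (fun s => (hderiv s).differentiableAt)
    (fun s => (hderiv s).deriv) t 0
  simpa [hz.map_zero] using hconst

lemma norm_sq_sub_sq (hz : IsPhaseCurve V A z) (hV : Differentiable ℝ V) (t : ℝ) :
    ‖z t‖ ^ 2 - A ^ 2 = -2 * (V (z t).im - V 0 - (z t).im ^ 2 / 2) := by
  rw [Complex.sq_norm, Complex.normSq_apply]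
  linear_combination 2 * hz.energy_eq hV t

lemma eventually_norm_le_two_mul_abs (hV : Differentiable ℝ V)
    (hV₂ : (fun u => V u - V 0 - u ^ 2 / 2) =o[𝓝 0] fun u => u ^ 2) :
    ∀ᶠ A in 𝓝 0, ∀ z, IsPhaseCurve V A z → ∀ t, ‖z t‖ ≤ 2 * |A| := by
  obtain ⟨d, hd, hball⟩ := Metric.eventually_nhds_iff_ball.1
    (hV₂.bound (by norm_num : (0 : ℝ) < 1 / 4))
  filter_upwards [eventually_forall_abs_le_mul_abs
    (Metric.ball_mem_nhds 0 (half_pos hd)) 2] with A hA z hz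
  have bound_of_mem_well {t : ℝ} (ht : |(z t).im| < d) : ‖z t‖ ≤ 2 * |A| := by
    have hpot := hball (z t).im (by simpa using ht)
    rw [norm_eq_abs, norm_pow, norm_eq_abs, sq_abs] at hpot
    have hnorm := hz.norm_sq_sub_sq hV t
    have him : (z t).im ^ 2 ≤ ‖z t‖ ^ 2 := sq_le_sq' (neg_le_of_abs_le (Complex.abs_im_le_norm _))
      (le_of_abs_le (Complex.abs_im_le_norm _))
    refine (pow_le_pow_iff_left₀ (norm_nonneg _) (by positivity) two_ne_zero).1 ?_
    rw [mul_pow, sq_abs]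
    linarith [neg_le_of_abs_le hpot, sq_nonneg A]
  have stays_in_well (t : ℝ) : |(z t).im| < d := by
    by_contra! hout
    obtain ⟨s, hs⟩ := mem_range_of_exists_le_of_exists_ge (f := fun s => |(z s).im|) (c := d / 2)
      (Complex.continuous_im.comp hz.continuous).abs
      ⟨0, by simpa [hz.map_zero] using (half_pos hd).le⟩ ⟨t, by linarith⟩
    have hwell : |(z s).im| < d := hs.trans_lt (half_lt_self hd)
    have hinner := hA (z s).im ((Complex.abs_im_le_norm _).trans (bound_of_mem_well hwell))
    exact (show |(z s).im| < d / 2 by simpa using hinner).ne hs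
  exact fun t => bound_of_mem_well (stays_in_well t)

lemma eventually_abs_norm_sq_sub_sq_le (hV : Differentiable ℝ V)
    (hV₄ : (fun u => V u - V 0 - u ^ 2 / 2) =O[𝓝 0] fun u => u ^ 4) :
    ∃ C > 0, ∀ᶠ A in 𝓝 0, ∀ z, IsPhaseCurve V A z → ∀ t,
      |‖z t‖ ^ 2 - A ^ 2| ≤ C * |A| ^ 4 := by
  have hV₂ := hV₄.trans_isLittleO (isLittleO_pow_pow (by norm_num : 2 < 4))
  obtain ⟨C, hC, hbound⟩ := hV₄.exists_pos
  refine ⟨32 * C, by positivity, ?_⟩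
  filter_upwards [eventually_norm_le_two_mul_abs hV hV₂,
    eventually_forall_abs_le_mul_abs hbound.bound 2] with A hnorm hpot z hz t
  have him : |(z t).im| ≤ 2 * |A| := (Complex.abs_im_le_norm _).trans (hnorm z hz t)
  calc |‖z t‖ ^ 2 - A ^ 2| = 2 * ‖V (z t).im - V 0 - (z t).im ^ 2 / 2‖ := by
        rw [hz.norm_sq_sub_sq hV, abs_mul, norm_eq_abs]; norm_num
    _ ≤ 2 * (C * |(z t).im| ^ 4) := by
        gcongr; simpa only [norm_pow, norm_eq_abs] using hpot _ him
    _ ≤ 2 * (C * (2 * |A|) ^ 4) := by gcongr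
    _ = 32 * C * |A| ^ 4 := by ring

end IsPhaseCurve

section NormalForm

open Complex (I)
open scoped ComplexConjugate

/-- The cubic part of the near-identity change of variable `z ↦ z + cubicCorrection l z`, which
removes from `ẍ = -(x + l x³)`, written for `z = ẋ + i x`, all cubic monomials in `z` and `conj z`
except the resonant one `|z|² z`. -/
noncomputable def cubicCorrection (l : ℝ) (z : ℂ) : ℂ :=
  l / 32 * (2 * z ^ 3 - 6 * (z * conj z ^ 2) + conj z ^ 3)

/-- What is left over when `z + cubicCorrection l z` is compared with a rotation of angular
velocity `1 + 3 l A² / 8`, along a phase curve of the potential `V` that starts at `A`. -/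
noncomputable def normalFormRemainder (V : ℝ → ℝ) (l A : ℝ) (z : ℂ) : ℂ :=
  3 * l / 8 * (‖z‖ ^ 2 - A ^ 2 : ℝ) * I * z - 3 * l / 8 * A ^ 2 * I * cubicCorrection l z -
    (deriv V z.im - (z.im + l * z.im ^ 3) : ℝ) -
    l / 32 * (6 * z ^ 2 - 3 * conj z ^ 2 - 12 * (z * conj z)) * (deriv V z.im - z.im : ℝ)

lemma norm_cubicCorrection_le (l : ℝ) (z : ℂ) : ‖cubicCorrection l z‖ ≤ |l| * ‖z‖ ^ 3 := by
  have hpoly : ‖2 * z ^ 3 - 6 * (z * conj z ^ 2) + conj z ^ 3‖ ≤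
      2 * ‖z‖ ^ 3 + 6 * (‖z‖ * ‖z‖ ^ 2) + ‖z‖ ^ 3 := by
    refine (norm_add_le _ _).trans (add_le_add ((norm_sub_le _ _).trans_eq ?_) ?_) <;> simp
  calc ‖cubicCorrection l z‖
      = |l| / 32 * ‖2 * z ^ 3 - 6 * (z * conj z ^ 2) + conj z ^ 3‖ := by simp [cubicCorrection]
    _ ≤ |l| / 32 * (2 * ‖z‖ ^ 3 + 6 * (‖z‖ * ‖z‖ ^ 2) + ‖z‖ ^ 3) := by gcongr
    _ = 9 / 32 * (|l| * ‖z‖ ^ 3) := by ring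
    _ ≤ |l| * ‖z‖ ^ 3 := mul_le_of_le_one_left (by positivity) (by norm_num)

lemma cubicCorrection_homological_equation (l : ℝ) (z : ℂ) :
    l / 32 * (2 * (3 * z ^ 2 * (I * z)) -
        6 * (I * z * conj z ^ 2 + z * (2 * conj z * (-I * conj z))) +
        3 * conj z ^ 2 * (-I * conj z)) - l * (z.im : ℂ) ^ 3 =
      I * cubicCorrection l z + 3 * l / 8 * (‖z‖ ^ 2 : ℝ) * I * z := by
  have him : (z.im : ℂ) = -I / 2 * (z - conj z) := by
    have hsub := Complex.sub_conj z
    push_cast at hsub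
    linear_combination (I / 2) * hsub + z.im * Complex.I_sq
  have hnorm : ((‖z‖ ^ 2 : ℝ) : ℂ) = z * conj z := by rw [Complex.mul_conj']; push_cast; rfl
  rw [cubicCorrection, him, hnorm]
  linear_combination l * I / 8 * (z - conj z) ^ 3 * Complex.I_sq

lemma IsPhaseCurve.hasDerivAt_rotation_sub {V : ℝ → ℝ} {A : ℝ} {z : ℝ → ℂ}
    (hz : IsPhaseCurve V A z) (t : ℝ) :
    HasDerivAt z (I * z t - (deriv V (z t).im - (z t).im : ℝ)) t := by
  refine (hz.hasDerivAt t).congr_deriv ?_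
  push_cast
  linear_combination I * Complex.re_add_im (z t) - (z t).im * Complex.I_sq

lemma IsPhaseCurve.hasDerivAt_add_cubicCorrection {V : ℝ → ℝ} {A : ℝ} {z : ℝ → ℂ}
    (hz : IsPhaseCurve V A z) (l t : ℝ) :
    HasDerivAt (fun s => z s + cubicCorrection l (z s))
      ((1 + 3 * l * A ^ 2 / 8 : ℝ) * I * (z t + cubicCorrection l (z t)) +
        normalFormRemainder V l A (z t)) t := by
  have hderiv := hz.hasDerivAt_rotation_sub t
  have hconj : HasDerivAt (fun s => conj (z s))
      (-I * conj (z t) - (deriv V (z t).im - (z t).im : ℝ)) t :=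
    hderiv.star.congr_deriv (by simp)
  refine (hderiv.fun_add <| ((((hderiv.fun_pow 3).const_mul 2).fun_sub
    ((hderiv.fun_mul (hconj.fun_pow 2)).const_mul 6)).fun_add (hconj.fun_pow 3)).const_mul
      (l / 32 : ℂ)).congr_deriv ?_
  have hcubic := cubicCorrection_homological_equation l (z t)
  rw [normalFormRemainder]
  push_cast at hcubic ⊢
  linear_combination hcubic

lemma norm_normalFormRemainder_le (V : ℝ → ℝ) (l A : ℝ) (z : ℂ) :
    ‖normalFormRemainder V l A z‖ ≤
      |l| * |‖z‖ ^ 2 - A ^ 2| * ‖z‖ + |l| ^ 2 * A ^ 2 * ‖z‖ ^ 3 +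
        |deriv V z.im - (z.im + l * z.im ^ 3)| + |l| * ‖z‖ ^ 2 * |deriv V z.im - z.im| := by
  have hresonant : ‖3 * l / 8 * (‖z‖ ^ 2 - A ^ 2 : ℝ) * I * z‖ ≤
      |l| * |‖z‖ ^ 2 - A ^ 2| * ‖z‖ := by
    calc ‖3 * l / 8 * (‖z‖ ^ 2 - A ^ 2 : ℝ) * I * z‖
        = 3 * |l| / 8 * |‖z‖ ^ 2 - A ^ 2| * ‖z‖ := by
          simp [-Complex.ofReal_sub, -Complex.ofReal_pow]
      _ ≤ |l| * |‖z‖ ^ 2 - A ^ 2| * ‖z‖ := by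
          linarith [show 0 ≤ |l| * |‖z‖ ^ 2 - A ^ 2| * ‖z‖ by positivity]
  have hcorrection : ‖3 * l / 8 * A ^ 2 * I * cubicCorrection l z‖ ≤
      |l| ^ 2 * A ^ 2 * ‖z‖ ^ 3 := by
    calc ‖3 * l / 8 * A ^ 2 * I * cubicCorrection l z‖
        = 3 * |l| / 8 * A ^ 2 * ‖cubicCorrection l z‖ := by simp
      _ ≤ 3 * |l| / 8 * A ^ 2 * (|l| * ‖z‖ ^ 3) := by
          gcongr; exact norm_cubicCorrection_le l z
      _ ≤ |l| ^ 2 * A ^ 2 * ‖z‖ ^ 3 := by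
          linarith [show 0 ≤ |l| ^ 2 * A ^ 2 * ‖z‖ ^ 3 by positivity]
  have hquadratic : ‖6 * z ^ 2 - 3 * conj z ^ 2 - 12 * (z * conj z)‖ ≤
      6 * ‖z‖ ^ 2 + 3 * ‖z‖ ^ 2 + 12 * (‖z‖ * ‖z‖) := by
    refine (norm_sub_le _ _).trans (add_le_add ((norm_sub_le _ _).trans_eq ?_) ?_) <;> simp
  have hforce : ‖l / 32 * (6 * z ^ 2 - 3 * conj z ^ 2 - 12 * (z * conj z)) *
      (deriv V z.im - z.im : ℝ)‖ ≤ |l| * ‖z‖ ^ 2 * |deriv V z.im - z.im| := by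
    rw [norm_mul, Complex.norm_real, norm_eq_abs]
    gcongr
    rw [norm_mul, norm_div, Complex.norm_real, Complex.norm_ofNat, norm_eq_abs]
    calc _ ≤ |l| / 32 * (6 * ‖z‖ ^ 2 + 3 * ‖z‖ ^ 2 + 12 * (‖z‖ * ‖z‖)) := by gcongr
      _ ≤ |l| * ‖z‖ ^ 2 := by linarith [show 0 ≤ |l| * ‖z‖ ^ 2 by positivity]
  rw [normalFormRemainder]
  refine (norm_sub_le _ _).trans (add_le_add ((norm_sub_le _ _).trans (add_le_add
    ((norm_sub_le _ _).trans (add_le_add hresonant hcorrection)) ?_)) hforce)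
  rw [Complex.norm_real, norm_eq_abs]

end NormalForm

section FrequencyShift

open Complex (I)

variable {V : ℝ → ℝ} {l : ℝ}

lemma isBigO_deriv_sub_id (hV' : (fun u => deriv V u - (u + l * u ^ 3)) =O[𝓝 0] fun u => u ^ 4) :
    (fun u => deriv V u - u) =O[𝓝 0] fun u => u ^ 3 := by
  have hcubic : (fun u : ℝ => l * u ^ 3) =O[𝓝 0] fun u => u ^ 3 := isBigO_const_mul_self _ _ _
  exact ((hV'.trans (isLittleO_pow_pow (by norm_num : 3 < 4)).isBigO).add hcubic).congr_left
    fun u => by ring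

lemma isBigO_potential_sub_harmonic (hV : Differentiable ℝ V)
    (hV' : (fun u => deriv V u - u) =O[𝓝 0] fun u => u ^ 3) :
    (fun u => V u - V 0 - u ^ 2 / 2) =O[𝓝 0] fun u => u ^ 4 := by
  have hderiv (u : ℝ) : HasDerivAt (fun s => V s - s ^ 2 / 2) (deriv V u - u) u :=
    ((hV u).hasDerivAt.fun_sub ((hasDerivAt_pow 2 u).div_const 2)).congr_deriv (by norm_num)
  refine (isBigO_sub_pow_succ_of_deriv_isBigO (.of_forall fun u => (hderiv u).differentiableAt)
    (hV'.congr_left fun u => (hderiv u).deriv.symm)).congr_left fun u => ?_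
  ring

lemma eventually_norm_normalFormRemainder_le (hV : Differentiable ℝ V)
    (hV' : (fun u => deriv V u - (u + l * u ^ 3)) =O[𝓝 0] fun u => u ^ 4) :
    ∃ C > 0, ∀ᶠ A in 𝓝 0, ∀ z, IsPhaseCurve V A z → ∀ t,
      ‖normalFormRemainder V l A (z t)‖ ≤ C * |A| ^ 4 := by
  have hV₃ := isBigO_deriv_sub_id hV'
  have hV₄ := isBigO_potential_sub_harmonic hV hV₃
  obtain ⟨C₂, hC₂, henergy⟩ := IsPhaseCurve.eventually_abs_norm_sq_sub_sq_le hV hV₄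
  obtain ⟨C₃, hC₃, hforce₃⟩ := hV₃.exists_pos
  obtain ⟨C₄, hC₄, hforce₄⟩ := hV'.exists_pos
  refine ⟨(2 * |l| * C₂ + 8 * |l| ^ 2 + 32 * |l| * C₃) + 16 * C₄, by positivity, ?_⟩
  filter_upwards [henergy, IsPhaseCurve.eventually_norm_le_two_mul_abs hV
      (hV₄.trans_isLittleO (isLittleO_pow_pow (by norm_num : 2 < 4))),
    eventually_forall_abs_le_mul_abs (hforce₃.bound.and hforce₄.bound) 2,
    Metric.ball_mem_nhds 0 one_pos] with A henergy hnorm hforce hA z hz t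
  have hA₁ : |A| ≤ 1 := by simpa using (Metric.mem_ball.1 hA).le
  have hz₂ := hnorm z hz t
  have him : |(z t).im| ≤ 2 * |A| := (Complex.abs_im_le_norm _).trans hz₂
  obtain ⟨hf₃, hf₄⟩ := hforce _ him
  simp only [norm_eq_abs, abs_pow] at hf₃ hf₄
  calc ‖normalFormRemainder V l A (z t)‖
      ≤ |l| * |‖z t‖ ^ 2 - A ^ 2| * ‖z t‖ + |l| ^ 2 * |A| ^ 2 * ‖z t‖ ^ 3 +
          |deriv V (z t).im - ((z t).im + l * (z t).im ^ 3)| +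
          |l| * ‖z t‖ ^ 2 * |deriv V (z t).im - (z t).im| := by
        rw [sq_abs A]; exact norm_normalFormRemainder_le V l A (z t)
    _ ≤ |l| * (C₂ * |A| ^ 4) * (2 * |A|) + |l| ^ 2 * |A| ^ 2 * (2 * |A|) ^ 3 +
          C₄ * |(z t).im| ^ 4 + |l| * (2 * |A|) ^ 2 * (C₃ * |(z t).im| ^ 3) := by
        gcongr; exact henergy z hz t
    _ ≤ |l| * (C₂ * |A| ^ 4) * (2 * |A|) + |l| ^ 2 * |A| ^ 2 * (2 * |A|) ^ 3 +
          C₄ * (2 * |A|) ^ 4 + |l| * (2 * |A|) ^ 2 * (C₃ * (2 * |A|) ^ 3) := by gcongr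
    _ = (2 * |l| * C₂ + 8 * |l| ^ 2 + 32 * |l| * C₃) * |A| ^ 4 * |A| + 16 * C₄ * |A| ^ 4 := by
        ring
    _ ≤ (2 * |l| * C₂ + 8 * |l| ^ 2 + 32 * |l| * C₃) * |A| ^ 4 * 1 + 16 * C₄ * |A| ^ 4 := by
        gcongr
    _ = ((2 * |l| * C₂ + 8 * |l| ^ 2 + 32 * |l| * C₃) + 16 * C₄) * |A| ^ 4 := by ring

theorem eventually_abs_im_sub_sin_le (hV : Differentiable ℝ V)
    (hV' : (fun u => deriv V u - (u + l * u ^ 3)) =O[𝓝 0] fun u => u ^ 4) :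
    ∃ C > 0, ∀ᶠ A in 𝓝 0, ∀ z, IsPhaseCurve V A z → ∀ T,
      |(z T).im - A * Real.sin ((1 + 3 * l * A ^ 2 / 8) * T)| ≤
        C * (|A| ^ 3 + |A| ^ 4 * |T|) := by
  obtain ⟨C, hC, hremainder⟩ := eventually_norm_normalFormRemainder_le hV hV'
  have hV₂ := (isBigO_potential_sub_harmonic hV (isBigO_deriv_sub_id hV')).trans_isLittleO
    (isLittleO_pow_pow (by norm_num : 2 < 4))
  refine ⟨C + 9 * |l|, by positivity, ?_⟩
  filter_upwards [hremainder, IsPhaseCurve.eventually_norm_le_two_mul_abs hV hV₂] with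
    A hremainder hnorm z hz T
  set ω := 1 + 3 * l * A ^ 2 / 8
  set rot := Complex.exp ((ω * T : ℝ) * I)
  have hrot : ‖rot‖ = 1 := Complex.norm_exp_ofReal_mul_I _
  have hmain := norm_sub_exp_mul_le_of_hasDerivAt (hz.hasDerivAt_add_cubicCorrection l)
    (hremainder z hz) T
  have hcorr_T : ‖cubicCorrection l (z T)‖ ≤ |l| * (2 * |A|) ^ 3 :=
    (norm_cubicCorrection_le l _).trans (by gcongr; exact hnorm z hz T)
  have hcorr_0 : ‖rot * cubicCorrection l (z 0)‖ ≤ |l| * |A| ^ 3 := by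
    simpa [hrot, hz.map_zero] using norm_cubicCorrection_le l (z 0)
  calc |(z T).im - A * Real.sin (ω * T)| = |(z T - rot * A).im| := by
        rw [Complex.sub_im, Complex.im_mul_ofReal, Complex.exp_ofReal_mul_I_im, mul_comm A]
    _ ≤ ‖z T - rot * A‖ := Complex.abs_im_le_norm _
    _ = ‖z T + cubicCorrection l (z T) - rot * (z 0 + cubicCorrection l (z 0)) -
          cubicCorrection l (z T) + rot * cubicCorrection l (z 0)‖ := by
        rw [hz.map_zero]; ring_nf
    _ ≤ C * |A| ^ 4 * |T| + |l| * (2 * |A|) ^ 3 + |l| * |A| ^ 3 :=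
        (norm_add_le _ _).trans
          (add_le_add ((norm_sub_le _ _).trans (add_le_add hmain hcorr_T)) hcorr_0)
    _ ≤ (C + 9 * |l|) * (|A| ^ 3 + |A| ^ 4 * |T|) := by
        linarith [show 0 ≤ C * |A| ^ 3 by positivity,
          show 0 ≤ |l| * (|A| ^ 4 * |T|) by positivity]

end FrequencyShift

section Scaling

/-- The `(n,t)`-scaling parameter `Γ_{n,t}`, chosen so that the phase shift `3 l Γ² n π / 8`
accumulated over the time `n π` is `l t`. -/
noncomputable def scalingParam (n : ℕ) (t : ℝ) : ℝ :=
  √(8 * t / (3 * π * n))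

variable {n : ℕ} {t K e : ℝ}

lemma scalingParam_nonneg (n : ℕ) (t : ℝ) : 0 ≤ scalingParam n t := sqrt_nonneg _

lemma scalingParam_pos (hn : n ≠ 0) (ht : 0 < t) : 0 < scalingParam n t := by
  rw [scalingParam]; positivity

lemma sq_scalingParam_mul (hn : n ≠ 0) (ht : 0 ≤ t) :
    scalingParam n t ^ 2 * (3 * π * n) = 8 * t := by
  rw [scalingParam, sq_sqrt (by positivity)]
  field_simp

lemma abs_scalingParam_mul_le {v : ℝ} (hv : |v| ≤ 1) :
    |scalingParam n t * v| ≤ scalingParam n t := by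
  rw [abs_mul, abs_of_nonneg (scalingParam_nonneg n t)]
  exact mul_le_of_le_one_right (scalingParam_nonneg n t) hv

lemma scalingParam_le (hn : n ≠ 0) (ht : t ∈ Set.Ioc 0 (K * (n : ℝ) ^ (1 / 3 - e))) :
    scalingParam n t ≤ √K * (n : ℝ) ^ (-(1 / 3) - e / 2) := by
  have hn₀ : (0 : ℝ) < n := by positivity
  have hpow : (n : ℝ) ^ (1 / 3 - e) / n = ((n : ℝ) ^ (-(1 / 3) - e / 2)) ^ 2 := by
    rw [← rpow_sub_one hn₀.ne', ← rpow_mul_natCast hn₀.le]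
    congr 1; push_cast; ring
  calc scalingParam n t ≤ √(t / n) := by
        refine sqrt_le_sqrt ?_
        rw [mul_div_mul_comm]
        refine mul_le_of_le_one_left (div_nonneg ht.1.le hn₀.le) ?_
        rw [div_le_one (by positivity)]
        linarith [pi_gt_three]
    _ ≤ √(K * (n : ℝ) ^ (1 / 3 - e) / n) := by gcongr; exact ht.2
    _ = √K * (n : ℝ) ^ (-(1 / 3) - e / 2) := by
        rw [mul_div_assoc, hpow, sqrt_mul' _ (sq_nonneg _), sqrt_sq (by positivity)]

lemma eventually_scalingParam_mul {p : ℝ → Prop} (hp : ∀ᶠ A in 𝓝 0, p A) (K : ℝ)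
    (he : -(2 / 3) < e) :
    ∀ᶠ n : ℕ in atTop, ∀ v, |v| ≤ 1 → ∀ t ∈ Set.Ioc 0 (K * (n : ℝ) ^ (1 / 3 - e)),
      p (scalingParam n t * v) := by
  have hlim : Tendsto (fun n : ℕ => √K * (n : ℝ) ^ (-(1 / 3) - e / 2)) atTop (𝓝 0) := by
    have hpow := (tendsto_rpow_neg_atTop (show 0 < 1 / 3 + e / 2 by linarith)).comp
      tendsto_natCast_atTop_atTop
    simpa [Function.comp_def, neg_add', sub_eq_add_neg, add_comm] using hpow.const_mul √K
  filter_upwards [hlim.eventually (eventually_forall_abs_le_mul_abs hp 1),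
    eventually_ne_atTop 0] with n hpn hn v hv t ht
  refine hpn _ ?_
  rw [one_mul]
  exact (abs_scalingParam_mul_le hv).trans ((scalingParam_le hn ht).trans (le_abs_self _))

lemma sin_shifted_frequency_mul {l : ℝ} (hl : |l| = 1) (hn : n ≠ 0) (ht : 0 ≤ t) (v : ℝ) :
    sin ((1 + 3 * l * (scalingParam n t * v) ^ 2 / 8) * (n * π - l * t)) =
      (-1) ^ n * sin (l * t * (v ^ 2 - 1) - 3 * (scalingParam n t * v) ^ 2 * t / 8) := by
  have hl₂ : l ^ 2 = 1 := by rw [← sq_abs, hl, one_pow]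
  rw [← sin_add_nat_mul_pi]
  congr 1
  linear_combination (l * v ^ 2 / 8) * sq_scalingParam_mul hn ht -
    (3 * (scalingParam n t * v) ^ 2 * t / 8) * hl₂

lemma abs_rescaled_sub_le {l v C X : ℝ} (hl : |l| = 1) (hn : n ≠ 0) (ht : 0 < t)
    (hv : |v| ≤ 1) (hC : 0 ≤ C)
    (hX : |X - scalingParam n t * v *
        sin ((1 + 3 * l * (scalingParam n t * v) ^ 2 / 8) * (n * π - l * t))| ≤
      C * (|scalingParam n t * v| ^ 3 + |scalingParam n t * v| ^ 4 * |n * π - l * t|)) :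
    |(-1) ^ n * (scalingParam n t)⁻¹ * X - v * sin (l * t * (v ^ 2 - 1))| ≤
      C * (scalingParam n t ^ 2 + scalingParam n t ^ 3 * |n * π - l * t|) +
        scalingParam n t ^ 2 * t := by
  rw [sin_shifted_frequency_mul hl hn ht.le] at hX
  have hΓ := scalingParam_pos hn ht
  have hΓv : |scalingParam n t * v| ≤ scalingParam n t := abs_scalingParam_mul_le hv
  set Γ := scalingParam n t
  set θ := l * t * (v ^ 2 - 1)
  set s := sin (θ - 3 * (Γ * v) ^ 2 * t / 8)
  have hamplitude : |(-1) ^ n * Γ⁻¹ * (X - Γ * v * ((-1) ^ n * s))| ≤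
      C * (Γ ^ 2 + Γ ^ 3 * |n * π - l * t|) := by
    rw [abs_mul, abs_mul, abs_neg_one_pow, one_mul, abs_of_pos (inv_pos.2 hΓ),
      inv_mul_le_iff₀ hΓ]
    calc _ ≤ C * (|Γ * v| ^ 3 + |Γ * v| ^ 4 * |n * π - l * t|) := hX
      _ ≤ C * (Γ ^ 3 + Γ ^ 4 * |n * π - l * t|) := by gcongr
      _ = Γ * (C * (Γ ^ 2 + Γ ^ 3 * |n * π - l * t|)) := by ring
  have hphase : |v * (s - sin θ)| ≤ Γ ^ 2 * t := by
    calc |v * (s - sin θ)| = |v| * |s - sin θ| := abs_mul _ _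
      _ ≤ 1 * |θ - 3 * (Γ * v) ^ 2 * t / 8 - θ| :=
          mul_le_mul hv (abs_sin_sub_sin_le _ _) (abs_nonneg _) zero_le_one
      _ = 3 / 8 * (|Γ * v| ^ 2 * t) := by
          rw [sub_sub_cancel_left, abs_neg, one_mul, abs_of_nonneg (by positivity), sq_abs]; ring
      _ ≤ 3 / 8 * (Γ ^ 2 * t) := by gcongr
      _ ≤ Γ ^ 2 * t := mul_le_of_le_one_left (by positivity) (by norm_num)
  have hsplit : (-1) ^ n * Γ⁻¹ * X - v * sin θ =
      (-1) ^ n * Γ⁻¹ * (X - Γ * v * ((-1) ^ n * s)) + v * (s - sin θ) := by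
    have hsign : ((-1 : ℝ) ^ n) * (-1) ^ n = 1 := by rw [← mul_pow]; norm_num
    linear_combination (v * s * ((-1) ^ n * (-1) ^ n)) * inv_mul_cancel₀ hΓ.ne' + v * s * hsign
  rw [hsplit]
  exact (abs_add_le _ _).trans (add_le_add hamplitude hphase)

lemma abs_nat_mul_pi_sub_le {l : ℝ} (hl : |l| = 1) (hn : n ≠ 0) (he : -(2 / 3) ≤ e)
    (hK : 0 ≤ K) (ht : t ∈ Set.Ioc 0 (K * (n : ℝ) ^ (1 / 3 - e))) :
    |n * π - l * t| ≤ (4 + K) * n := by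
  have hn₁ : (1 : ℝ) ≤ n := by exact_mod_cast Nat.one_le_iff_ne_zero.2 hn
  calc |n * π - l * t| ≤ |n * π| + |l * t| := abs_sub _ _
    _ = n * π + t := by rw [abs_mul l, hl, one_mul, abs_of_pos ht.1, abs_of_nonneg (by positivity)]
    _ ≤ n * 4 + K * (n : ℝ) ^ (1 : ℝ) := by
        gcongr
        · exact pi_le_four
        · exact ht.2.trans (by gcongr; linarith)
    _ = (4 + K) * n := by rw [rpow_one]; ring

lemma rescaled_error_le {l C : ℝ} (hl : |l| = 1) (hn : n ≠ 0) (hC : 0 ≤ C)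
    (he₀ : -(2 / 3) ≤ e) (he₁ : e ≤ 4 / 3) (hK : 0 ≤ K)
    (ht : t ∈ Set.Ioc 0 (K * (n : ℝ) ^ (1 / 3 - e))) :
    C * (scalingParam n t ^ 2 + scalingParam n t ^ 3 * |n * π - l * t|) +
        scalingParam n t ^ 2 * t ≤
      (C * (√K ^ 2 + √K ^ 3 * (4 + K)) + √K ^ 2 * K) * (n : ℝ) ^ (-(3 * e / 2)) := by
  have hn₀ : (0 : ℝ) < n := by positivity
  have hn₁ : (1 : ℝ) ≤ n := by exact_mod_cast Nat.one_le_iff_ne_zero.2 hn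
  have hΓ := scalingParam_le hn ht
  have hΓ₀ := scalingParam_nonneg n t
  set p := (n : ℝ) ^ (-(1 / 3) - e / 2)
  have hamplitude : p ^ 2 ≤ (n : ℝ) ^ (-(3 * e / 2)) := by
    rw [← rpow_mul_natCast hn₀.le]
    gcongr; push_cast; linarith
  have hdrift : p ^ 3 * n = (n : ℝ) ^ (-(3 * e / 2)) := by
    rw [← rpow_mul_natCast hn₀.le, ← rpow_add_one hn₀.ne']
    congr 1; push_cast; ring
  have hphase : p ^ 2 * (n : ℝ) ^ (1 / 3 - e) ≤ (n : ℝ) ^ (-(3 * e / 2)) := by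
    rw [← rpow_mul_natCast hn₀.le, ← rpow_add hn₀]
    gcongr; push_cast; linarith
  calc C * (scalingParam n t ^ 2 + scalingParam n t ^ 3 * |n * π - l * t|) +
        scalingParam n t ^ 2 * t
      ≤ C * ((√K * p) ^ 2 + (√K * p) ^ 3 * ((4 + K) * n)) +
          (√K * p) ^ 2 * (K * (n : ℝ) ^ (1 / 3 - e)) := by
        gcongr
        · exact abs_nat_mul_pi_sub_le hl hn he₀ hK ht
        · exact ht.1.le
        · exact ht.2
    _ = C * (√K ^ 2 * p ^ 2 + √K ^ 3 * (4 + K) * (p ^ 3 * n)) +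
          √K ^ 2 * K * (p ^ 2 * (n : ℝ) ^ (1 / 3 - e)) := by ring
    _ ≤ C * (√K ^ 2 * (n : ℝ) ^ (-(3 * e / 2)) +
          √K ^ 3 * (4 + K) * (n : ℝ) ^ (-(3 * e / 2))) +
          √K ^ 2 * K * (n : ℝ) ^ (-(3 * e / 2)) := by
        rw [hdrift]; gcongr
    _ = (C * (√K ^ 2 + √K ^ 3 * (4 + K)) + √K ^ 2 * K) * (n : ℝ) ^ (-(3 * e / 2)) := by ring

end Scaling

lemma SolutionFamily.isPhaseCurve {V : ℝ → ℝ} {x : ℝ → ℝ → ℝ} {v₀ A : ℝ}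
    (hx : SolutionFamily V x v₀) (hA : |A| ≤ v₀) :
    IsPhaseCurve V A fun t => deriv (x A) t + x A t * Complex.I := by
  obtain ⟨hsmooth, hx₀, hv, hode⟩ := hx A hA
  have hderiv : Differentiable ℝ (deriv (x A)) :=
    (hsmooth.iterate_deriv' 1 1).differentiable one_ne_zero
  refine ⟨fun t => ?_, by simp [hx₀, hv]⟩
  refine ((hderiv t).hasDerivAt.ofReal_comp.add
    ((hsmooth.differentiable two_ne_zero t).hasDerivAt.ofReal_comp.mul_const
      Complex.I)).congr_deriv ?_
  simp [hode]

section PerturbedQuartic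

variable {V f : ℝ → ℝ} {l : ℝ}

lemma PerturbedQuartic.hasDerivAt (hV : PerturbedQuartic V f l) (u : ℝ) :
    HasDerivAt V (u + l * u ^ 3 + deriv f u) u := by
  obtain ⟨-, hf, hform, -⟩ := hV
  rw [funext hform]
  refine ((((hasDerivAt_pow 2 u).div_const 2).add
    (((hasDerivAt_pow 4 u).const_mul l).div_const 4)).add
      (hf.differentiable (by norm_num) u).hasDerivAt).congr_deriv ?_
  push_cast
  ring

lemma PerturbedQuartic.differentiable (hV : PerturbedQuartic V f l) : Differentiable ℝ V :=
  fun u => (hV.hasDerivAt u).differentiableAt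

lemma PerturbedQuartic.isBigO_deriv_sub (hV : PerturbedQuartic V f l) :
    (fun u => deriv V u - (u + l * u ^ 3)) =O[𝓝 0] fun u => u ^ 4 := by
  have hf : deriv f =O[𝓝 0] fun u : ℝ => |u| ^ 4 := by
    simpa only [iteratedDeriv_one] using hV.2.2.2 1 (by norm_num)
  refine IsBigO.congr (hf.trans (isBigO_of_le _ fun u => ?_)) (fun u => ?_) fun u => rfl
  · simp
  · rw [(hV.hasDerivAt u).deriv, add_sub_cancel_left]

end PerturbedQuartic

theorem statement2_general {V : ℝ → ℝ} {l : ℝ} (hl : |l| = 1) (hV : Differentiable ℝ V)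
    (hV' : (fun u => deriv V u - (u + l * u ^ 3)) =O[𝓝 0] fun u => u ^ 4)
    {v₀ : ℝ} (hv₀ : 0 < v₀) {x : ℝ → ℝ → ℝ} (hx : SolutionFamily V x v₀)
    {K e : ℝ} (hK : 0 < K) (he₀ : -(2 / 3) < e) (he₁ : e ≤ 4 / 3) :
    ∃ C > 0, ∃ N : ℕ, 1 ≤ N ∧ ∀ n : ℕ, N ≤ n → ∀ v ∈ Set.Icc (-1 : ℝ) 1,
      ∀ t ∈ Set.Ioc 0 (K * (n : ℝ) ^ (1 / 3 - e)),
        |scalingParam n t * v| ≤ v₀ ∧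
        |(-1) ^ n * (scalingParam n t)⁻¹ * x (scalingParam n t * v) (n * π - l * t) -
          v * sin (l * t * (v ^ 2 - 1))| ≤ C * (n : ℝ) ^ (-(3 * e / 2)) := by
  obtain ⟨C, hC, hshift⟩ := eventually_abs_im_sub_sin_le hV hV'
  have hsmall : ∀ᶠ A : ℝ in 𝓝 0, |A| ≤ v₀ :=
    (continuous_abs.tendsto' 0 0 abs_zero).eventually_le_const hv₀
  obtain ⟨N, hN⟩ := eventually_atTop.1 (eventually_scalingParam_mul (hshift.and hsmall) K he₀)
  refine ⟨C * (√K ^ 2 + √K ^ 3 * (4 + K)) + √K ^ 2 * K, by positivity, max N 1,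
    le_max_right _ _, fun n hn v hv t ht => ?_⟩
  have hn₀ : n ≠ 0 := Nat.one_le_iff_ne_zero.1 ((le_max_right _ _).trans hn)
  obtain ⟨hshift, hA⟩ := hN n ((le_max_left _ _).trans hn) v (abs_le.2 hv) t ht
  have hX := hshift _ (hx.isPhaseCurve hA) (n * π - l * t)
  simp only [Complex.add_im, Complex.ofReal_im, Complex.im_ofReal_mul,
    Complex.I_im, mul_one, zero_add] at hX
  exact ⟨hA, (abs_rescaled_sub_le hl hn₀ ht.1 (abs_le.2 hv) hC.le hX).trans
    (rescaled_error_le hl hn₀ hC.le he₀.le he₁ hK.le ht)⟩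

/-- there is `K > 0` such that for every `0 < ε < 1/3` the sup over
`v ∈ [-1,1]` and `t ∈ (0, K n^{1/3-ε}]` of `|x_n(v;t) - v sin(ℓt(v²-1))|` is at
most `C n^{-3ε/2}` for all large `n`. -/
theorem statement2 (V f : ℝ → ℝ) (l : ℝ) (hV : PerturbedQuartic V f l)
    (v₀ : ℝ) (hv₀ : 0 < v₀) (x : ℝ → ℝ → ℝ) (hx : SolutionFamily V x v₀) :
    ∃ K > (0 : ℝ), ∀ e : ℝ, 0 < e → e < 1 / 3 →
      ∃ C > (0 : ℝ), ∃ N : ℕ, 1 ≤ N ∧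
        ∀ n : ℕ, N ≤ n → ∀ v ∈ Set.Icc (-1 : ℝ) 1,
          ∀ t ∈ Set.Ioc (0 : ℝ) (K * (n : ℝ) ^ ((1 : ℝ) / 3 - e)),
            -- `x_n(v;t)` is well defined:
            |Real.sqrt (8 * t / (3 * Real.pi * (n : ℝ))) * v| ≤ v₀ ∧
            |(-1 : ℝ) ^ n * (Real.sqrt (8 * t / (3 * Real.pi * (n : ℝ))))⁻¹ *
                x (Real.sqrt (8 * t / (3 * Real.pi * (n : ℝ))) * v) ((n : ℝ) * Real.pi - l * t) -
              v * Real.sin (l * t * (v ^ 2 - 1))| ≤ C * (n : ℝ) ^ (-(3 * e / 2)) := by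
  exact ⟨1, one_pos, fun e he₀ he₁ => statement2_general ((abs_eq zero_le_one).2 hV.1)
    hV.differentiable hV.isBigO_deriv_sub hv₀ hx one_pos (by linarith) (by linarith)⟩
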